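/- arXiv:1406.1692 — 12 statements merged into one kernel-verified Lean document; each statement's English description precedes it below -/
import Mathlib

section
/- Let a and b be symmetric and transitive binary relations on a set Ω whose relational compositions commute, i.e. a ∘ b = b ∘ a. Then the book-keeping product on the power set of Ω is para-associative: for all subsets x, y, z, u, v ⊆ Ω one has Γ_{a,b}(x, y, Γ_{a,b}(z,u,v)) = Γ_{a,b}(x, Γ_{a,b}(u,z,y), v) = Γ_{a,b}(Γ_{a,b}(x,y,z), u, v). (Hence (𝒫(Ω), Γ_{a,b}) is a semitorsor.) -/
/-!
Read `a` as horizontal and `b` as vertical adjacency: `ω ∈ bkProd a b x y z` says that `ω` is the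
fourth corner of a rectangle with corners `ξ ∈ x`, `η ∈ y`, `ζ ∈ z`. Each of the three iterated
products then consists of the points `ω` which, together with points of `x`, `y`, `z`, `u`, `v` and
one auxiliary point (the inner product's corner), form a pair of such rectangles. The
point `ω` and the five points of the given sets are kept throughout. In passing from one iterated
product to another, commutation `a ∘ b = b ∘ a` supplies the new auxiliary corner, `a`-adjacent to
one of the points present and `b`-adjacent to another; symmetry and transitivity yield all
remaining relations.
-/

/-- The book-keeping product on the power set of `Ω` associated to two
binary relations `a`, `b`. -/
def bkProd {Ω : Type*} (a b : Ω → Ω → Prop) (x y z : Set Ω) : Set Ω :=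
  {ω | ∃ ξ ∈ x, ∃ η ∈ y, ∃ ζ ∈ z, a ω ζ ∧ a η ξ ∧ b ω ξ ∧ b η ζ}

theorem bkProd_paraAssoc {Ω : Type*} (a b : Ω → Ω → Prop)
    (ha_symm : ∀ {u v}, a u v → a v u)
    (ha_trans : ∀ {u v w}, a u v → a v w → a u w)
    (hb_symm : ∀ {u v}, b u v → b v u)
    (hb_trans : ∀ {u v w}, b u v → b v w → b u w)
    (hcomm : ∀ ω ζ, (∃ η, a ω η ∧ b η ζ) ↔ (∃ η, b ω η ∧ a η ζ))
    (x y z u v : Set Ω) :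
    bkProd a b x y (bkProd a b z u v) = bkProd a b x (bkProd a b u z y) v ∧
    bkProd a b x (bkProd a b u z y) v = bkProd a b (bkProd a b x y z) u v := by
  constructor <;> ext ω <;> constructor
  · rintro ⟨p, hp, q, hq, t, ⟨r, hr, s, hs, w, hw, atw, asr, btr, bsw⟩, aωt, aqp, bωp, bqt⟩
    -- The path `q -b- r -a- s` provides the corner `c` with `q -a- c -b- s`.
    obtain ⟨c, aqc, bcs⟩ := (hcomm q s).2 ⟨r, hb_trans bqt btr, ha_symm asr⟩
    exact ⟨p, hp, c, ⟨s, hs, r, hr, q, hq, ha_symm aqc, ha_symm asr, bcs,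
      hb_symm (hb_trans bqt btr)⟩, w, hw, ha_trans aωt atw, ha_trans (ha_symm aqc) aqp, bωp,
      hb_trans bcs bsw⟩
  · rintro ⟨p, hp, c, ⟨s, hs, r, hr, q, hq, acq, ars, bcs, brq⟩, w, hw, aωw, acp, bωp, bcw⟩
    -- The path `w -b- c -a- q` provides the corner `t` with `w -a- t -b- q`.
    obtain ⟨t, awt, btq⟩ := (hcomm w q).2 ⟨c, hb_symm bcw, acq⟩
    exact ⟨p, hp, q, hq, t, ⟨r, hr, s, hs, w, hw, ha_symm awt, ha_symm ars,
      hb_trans btq (hb_symm brq), hb_trans (hb_symm bcs) bcw⟩, ha_trans aωw awt,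
      ha_trans (ha_symm acq) acp, bωp, hb_symm btq⟩
  · rintro ⟨p, hp, c, ⟨s, hs, r, hr, q, hq, acq, ars, bcs, brq⟩, w, hw, aωw, acp, bωp, bcw⟩
    -- The path `p -a- q -b- r` provides the corner `t` with `p -b- t -a- r`.
    obtain ⟨t, bpt, atr⟩ := (hcomm p r).1 ⟨q, ha_trans (ha_symm acp) acq, hb_symm brq⟩
    exact ⟨t, ⟨p, hp, q, hq, r, hr, atr, ha_trans (ha_symm acq) acp, hb_symm bpt,
      hb_symm brq⟩, s, hs, w, hw, aωw, ha_symm (ha_trans atr ars), hb_trans bωp bpt,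
      hb_trans (hb_symm bcs) bcw⟩
  · rintro ⟨t, ⟨p, hp, q, hq, r, hr, atr, aqp, btp, bqr⟩, s, hs, w, hw, aωw, ast, bωt, bsw⟩
    have ars : a r s := ha_symm (ha_trans ast atr)
    -- The path `q -b- r -a- s` provides the corner `c` with `q -a- c -b- s`.
    obtain ⟨c, aqc, bcs⟩ := (hcomm q s).2 ⟨r, bqr, ars⟩
    exact ⟨p, hp, c, ⟨s, hs, r, hr, q, hq, ha_symm aqc, ars, bcs, hb_symm bqr⟩, w, hw, aωw,
      ha_trans (ha_symm aqc) aqp, hb_trans bωt btp, hb_trans bcs bsw⟩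
end

section
/- Let a and b be equivalence relations on a set Ω whose relational compositions commute, i.e. a ∘ b = b ∘ a. If subsets x, y, z ⊆ Ω satisfy x ∼𝐚 y and y ∼𝐛 z, then Γ_{a,b}(x,y,z) ∼𝐚 z and Γ_{a,b}(x,y,z) ∼𝐛 x. (That is, the book-keeping product makes (𝒫(Ω), 𝐚, 𝐛) a semi-pregroupoid.) -/
/-- The equivalence relation induced on subsets: the saturations coincide. -/
def indRel {Ω : Type*} (a : Ω → Ω → Prop) (x y : Set Ω) : Prop :=
  ∀ ω, (∃ ξ ∈ x, a ξ ω) ↔ (∃ η ∈ y, a η ω)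

theorem bkProd_semiPregroupoid {Ω : Type*} (a b : Ω → Ω → Prop)
    (ha : Equivalence a) (hb : Equivalence b)
    (hcomm : ∀ ω ζ, (∃ η, a ω η ∧ b η ζ) ↔ (∃ η, b ω η ∧ a η ζ))
    (x y z : Set Ω) (hxy : indRel a x y) (hyz : indRel b y z) :
    indRel a (bkProd a b x y z) z ∧ indRel b (bkProd a b x y z) x := by
  -- A chain `ξ ~a η ~b ζ` with `ξ ∈ x`, `η ∈ y`, `ζ ∈ z` is completed by commutation to a
  -- parallelogram whose fourth vertex `ω`, with `ξ ~b ω ~a ζ`, lies in the product.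
  have key : ∀ ξ ∈ x, ∀ η ∈ y, ∀ ζ ∈ z, a ξ η → b η ζ →
      ∃ ω ∈ bkProd a b x y z, a ω ζ ∧ b ω ξ := by
    intro ξ hξ η hη ζ hζ h₁ h₂
    obtain ⟨ω, h₃, h₄⟩ := (hcomm ξ ζ).1 ⟨η, h₁, h₂⟩
    exact ⟨ω, ⟨ξ, hξ, η, hη, ζ, hζ, h₄, ha.symm h₁, hb.symm h₃, h₂⟩, h₄, hb.symm h₃⟩
  refine ⟨fun τ => ⟨?_, ?_⟩, fun τ => ⟨?_, ?_⟩⟩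
  · rintro ⟨ω, ⟨ξ, hξ, η, hη, ζ, hζ, h₁, h₂, h₃, h₄⟩, h⟩
    exact ⟨ζ, hζ, ha.trans (ha.symm h₁) h⟩
  · rintro ⟨ζ, hζ, h⟩
    obtain ⟨η, hη, h₂⟩ := (hyz ζ).2 ⟨ζ, hζ, hb.refl ζ⟩
    obtain ⟨ξ, hξ, h₁⟩ := (hxy η).2 ⟨η, hη, ha.refl η⟩
    obtain ⟨ω, hω, h₃, -⟩ := key ξ hξ η hη ζ hζ h₁ h₂
    exact ⟨ω, hω, ha.trans h₃ h⟩
  · rintro ⟨ω, ⟨ξ, hξ, η, hη, ζ, hζ, h₁, h₂, h₃, h₄⟩, h⟩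
    exact ⟨ξ, hξ, hb.trans (hb.symm h₃) h⟩
  · rintro ⟨ξ, hξ, h⟩
    obtain ⟨η, hη, h₁⟩ := (hxy ξ).1 ⟨ξ, hξ, ha.refl ξ⟩
    obtain ⟨ζ, hζ, h₂⟩ := (hyz η).1 ⟨η, hη, hb.refl η⟩
    obtain ⟨ω, hω, -, h₃⟩ := key ξ hξ η hη ζ hζ (ha.symm h₁) (hb.symm h₂)
    exact ⟨ω, hω, hb.trans h₃ h⟩
end

section
/- Let (Ω, a, b, μ) be a semi-pregroupoid. Then the induced product Γ_μ on the power set of Ω is para-associative: for all subsets x, y, z, u, v ⊆ Ω, Γ_μ(x, y, Γ_μ(z,u,v)) = Γ_μ(x, Γ_μ(u,z,y), v) = Γ_μ(Γ_μ(x,y,z), u, v). (Hence (𝒫(Ω), Γ_μ) is a semitorsor.) -/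
/-!
All three iterated products range over the same set of quintuples `(ξ, η, ρ, σ, τ)` in
`x × y × z × u × v`, namely those with `a ξ η`, `b η ρ`, `a ρ σ`, `b σ τ`. By (C), an inner
value `κ` of `μ` is `a`-related to its third argument and `b`-related to its first, so the
domain conditions that the outer product puts on `κ` are, by transitivity, the missing relations
of this chain. On such quintuples the three elements formed from them agree by (PA).
-/

/-- The product induced on subsets of `Ω` by a partially defined ternary map
`μ` with domain given by the equivalence relations `a`, `b`. -/
def gammaProd {Ω : Type*} (a b : Ω → Ω → Prop) (μ : Ω → Ω → Ω → Ω)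
    (x y z : Set Ω) : Set Ω :=
  {ω | ∃ ξ ∈ x, ∃ η ∈ y, ∃ ζ ∈ z, a η ξ ∧ b η ζ ∧ ω = μ ξ η ζ}

theorem gammaProd_paraAssoc {Ω : Type*} (a b : Ω → Ω → Prop)
    (ha : Equivalence a) (hb : Equivalence b)
    (μ : Ω → Ω → Ω → Ω)
    (hC : ∀ ξ η ζ, a ξ η → b η ζ → a (μ ξ η ζ) ζ ∧ b (μ ξ η ζ) ξ)
    (hPA : ∀ ξ η ρ σ τ, a ξ η → b η ρ → a ρ σ → b σ τ →
      μ ξ η (μ ρ σ τ) = μ ξ (μ σ ρ η) τ ∧ μ ξ (μ σ ρ η) τ = μ (μ ξ η ρ) σ τ)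
    (x y z u v : Set Ω) :
    gammaProd a b μ x y (gammaProd a b μ z u v) =
        gammaProd a b μ x (gammaProd a b μ u z y) v ∧
    gammaProd a b μ x (gammaProd a b μ u z y) v =
        gammaProd a b μ (gammaProd a b μ x y z) u v := by
  constructor
  · ext ω
    constructor
    · rintro ⟨ξ, hξ, η, hη, _, ⟨ρ, hρ, σ, hσ, τ, hτ, h1, h2, rfl⟩, h3, h4, rfl⟩
      have hηρ : b η ρ := hb.trans h4 (hC ρ σ τ (ha.symm h1) h2).2
      have hκ := hC σ ρ η h1 (hb.symm hηρ)
      exact ⟨ξ, hξ, μ σ ρ η, ⟨σ, hσ, ρ, hρ, η, hη, ha.symm h1, hb.symm hηρ, rfl⟩, τ, hτ,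
        ha.trans hκ.1 h3, hb.trans hκ.2 h2,
        (hPA ξ η ρ σ τ (ha.symm h3) hηρ (ha.symm h1) h2).1⟩
    · rintro ⟨ξ, hξ, _, ⟨σ, hσ, ρ, hρ, η, hη, h1, h2, rfl⟩, τ, hτ, h3, h4, rfl⟩
      have hκ := hC σ ρ η (ha.symm h1) h2
      have hηξ : a η ξ := ha.trans (ha.symm hκ.1) h3
      have hστ : b σ τ := hb.trans (hb.symm hκ.2) h4
      exact ⟨ξ, hξ, η, hη, μ ρ σ τ, ⟨ρ, hρ, σ, hσ, τ, hτ, ha.symm h1, hστ, rfl⟩,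
        hηξ, hb.symm (hb.trans (hC ρ σ τ h1 hστ).2 h2),
        (hPA ξ η ρ σ τ (ha.symm hηξ) (hb.symm h2) h1 hστ).1.symm⟩
  · ext ω
    constructor
    · rintro ⟨ξ, hξ, _, ⟨σ, hσ, ρ, hρ, η, hη, h1, h2, rfl⟩, τ, hτ, h3, h4, rfl⟩
      have hκ := hC σ ρ η (ha.symm h1) h2
      have hηξ : a η ξ := ha.trans (ha.symm hκ.1) h3
      have hστ : b σ τ := hb.trans (hb.symm hκ.2) h4
      exact ⟨μ ξ η ρ, ⟨ξ, hξ, η, hη, ρ, hρ, hηξ, hb.symm h2, rfl⟩, σ, hσ, τ, hτ,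
        ha.symm (ha.trans (hC ξ η ρ (ha.symm hηξ) (hb.symm h2)).1 h1), hστ,
        (hPA ξ η ρ σ τ (ha.symm hηξ) (hb.symm h2) h1 hστ).2⟩
    · rintro ⟨_, ⟨ξ, hξ, η, hη, ρ, hρ, h1, h2, rfl⟩, σ, hσ, τ, hτ, h3, h4, rfl⟩
      have hσρ : a σ ρ := ha.trans h3 (hC ξ η ρ (ha.symm h1) h2).1
      have hκ := hC σ ρ η hσρ (hb.symm h2)
      exact ⟨ξ, hξ, μ σ ρ η, ⟨σ, hσ, ρ, hρ, η, hη, ha.symm hσρ, hb.symm h2, rfl⟩, τ, hτ,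
        ha.trans hκ.1 h1, hb.trans hκ.2 h4,
        (hPA ξ η ρ σ τ (ha.symm h1) h2 (ha.symm hσρ) h4).2.symm⟩
end

section
/- Let a, b be equivalence relations on a set Ω and let μ : Ω → Ω → Ω → Ω satisfy condition (C): whenever a ξ η and b η ζ, one has a (μ ξ η ζ) ζ and b (μ ξ η ζ) ξ. If subsets x, y, z ⊆ Ω satisfy x ∼𝐚 y and y ∼𝐛 z, then Γ_μ(x,y,z) ∼𝐚 z and Γ_μ(x,y,z) ∼𝐛 x, where Γ_μ(x,y,z) := {μ ξ η ζ | ξ ∈ x, η ∈ y, ζ ∈ z, a η ξ, b η ζ}. -/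
theorem gammaProd_semiPregroupoid {Ω : Type*} (a b : Ω → Ω → Prop)
    (ha : Equivalence a) (hb : Equivalence b)
    (μ : Ω → Ω → Ω → Ω)
    (hC : ∀ ξ η ζ, a ξ η → b η ζ → a (μ ξ η ζ) ζ ∧ b (μ ξ η ζ) ξ)
    (x y z : Set Ω) (hxy : indRel a x y) (hyz : indRel b y z) :
    indRel a (gammaProd a b μ x y z) z ∧ indRel b (gammaProd a b μ x y z) x := by
  refine ⟨fun ω => ⟨?_, ?_⟩, fun ω => ⟨?_, ?_⟩⟩
  · rintro ⟨_, ⟨ξ, -, η, -, ζ, hζ, hηξ, hηζ, rfl⟩, hω⟩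
    exact ⟨ζ, hζ, ha.trans (ha.symm (hC ξ η ζ (ha.symm hηξ) hηζ).1) hω⟩
  · rintro ⟨ζ, hζ, hω⟩
    -- `ζ` lies in the `b`-saturation of `z`, hence of `y`; the resulting `η` lies in the
    -- `a`-saturation of `y`, hence of `x`. So `ζ` completes to a triple in the domain of `μ`.
    obtain ⟨η, hη, hηζ⟩ := (hyz ζ).2 ⟨ζ, hζ, hb.refl ζ⟩
    obtain ⟨ξ, hξ, hξη⟩ := (hxy η).2 ⟨η, hη, ha.refl η⟩
    exact ⟨_, ⟨ξ, hξ, η, hη, ζ, hζ, ha.symm hξη, hηζ, rfl⟩,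
      ha.trans (hC ξ η ζ hξη hηζ).1 hω⟩
  · rintro ⟨_, ⟨ξ, hξ, η, -, ζ, -, hηξ, hηζ, rfl⟩, hω⟩
    exact ⟨ξ, hξ, hb.trans (hb.symm (hC ξ η ζ (ha.symm hηξ) hηζ).2) hω⟩
  · rintro ⟨ξ, hξ, hω⟩
    -- Symmetrically, `ξ` completes to a triple through `y` and then `z`.
    obtain ⟨η, hη, hηξ⟩ := (hxy ξ).1 ⟨ξ, hξ, ha.refl ξ⟩
    obtain ⟨ζ, hζ, hζη⟩ := (hyz η).1 ⟨η, hη, hb.refl η⟩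
    exact ⟨_, ⟨ξ, hξ, η, hη, ζ, hζ, hηξ, hb.symm hζη, rfl⟩,
      hb.trans (hC ξ η ζ (ha.symm hηξ) (hb.symm hζη)).2 hω⟩
end

section
/- Let a, b be equivalence relations on a set Ω and let μ : Ω → Ω → Ω → Ω satisfy condition (C): whenever a ξ η and b η ζ, one has a (μ ξ η ζ) ζ and b (μ ξ η ζ) ξ. If x, y, z ⊆ Ω are local bisections (each meets every a-class at most once and every b-class at most once), then Γ_μ(x,y,z) := {μ ξ η ζ | ξ ∈ x, η ∈ y, ζ ∈ z, a η ξ, b η ζ} is again a local bisection. -/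
/-- `x` is locally transversal to `a`: it meets each `a`-class at most once. -/
def LocTransversal {Ω : Type*} (a : Ω → Ω → Prop) (x : Set Ω) : Prop :=
  ∀ ξ ∈ x, ∀ ξ' ∈ x, a ξ ξ' → ξ = ξ'

/-- A local bisection of `(a, b)`. -/
def LocBisection {Ω : Type*} (a b : Ω → Ω → Prop) (x : Set Ω) : Prop :=
  LocTransversal a x ∧ LocTransversal b x

theorem gammaProd_locBisection {Ω : Type*} (a b : Ω → Ω → Prop)
    (ha : Equivalence a) (hb : Equivalence b)
    (μ : Ω → Ω → Ω → Ω)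
    (hC : ∀ ξ η ζ, a ξ η → b η ζ → a (μ ξ η ζ) ζ ∧ b (μ ξ η ζ) ξ)
    (x y z : Set Ω)
    (hx : LocBisection a b x) (hy : LocBisection a b y) (hz : LocBisection a b z) :
    LocBisection a b (gammaProd a b μ x y z) := by
  constructor
  -- For `a`, the third factors agree, then the second, then the first.
  · rintro _ ⟨ξ, hξ, η, hη, ζ, hζ, h1, h2, rfl⟩ _ ⟨ξ', hξ', η', hη', ζ', hζ', h1', h2', rfl⟩ h
    have m := (hC ξ η ζ (ha.symm h1) h2).1
    have m' := (hC ξ' η' ζ' (ha.symm h1') h2').1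
    obtain rfl := hz.1 ζ hζ ζ' hζ' (ha.trans (ha.symm m) (ha.trans h m'))
    obtain rfl := hy.2 η hη η' hη' (hb.trans h2 (hb.symm h2'))
    obtain rfl := hx.1 ξ hξ ξ' hξ' (ha.trans (ha.symm h1) h1')
    rfl
  -- For `b`, the factors agree in the opposite order.
  · rintro _ ⟨ξ, hξ, η, hη, ζ, hζ, h1, h2, rfl⟩ _ ⟨ξ', hξ', η', hη', ζ', hζ', h1', h2', rfl⟩ h
    have m := (hC ξ η ζ (ha.symm h1) h2).2
    have m' := (hC ξ' η' ζ' (ha.symm h1') h2').2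
    obtain rfl := hx.2 ξ hξ ξ' hξ' (hb.trans (hb.symm m) (hb.trans h m'))
    obtain rfl := hy.1 η hη η' hη' (ha.trans h1 (ha.symm h1'))
    obtain rfl := hz.2 ζ hζ ζ' hζ' (hb.trans (hb.symm h2) h2')
    rfl
end

section
/- Let a, b be equivalence relations on a set Ω and let μ : Ω → Ω → Ω → Ω satisfy: (C) whenever a ξ η and b η ζ, a (μ ξ η ζ) ζ and b (μ ξ η ζ) ξ; and the idempotent laws (IP) μ η η ζ = ζ whenever b η ζ, and μ ξ η η = ξ whenever a ξ η. Let x, z ⊆ Ω be local bisections (each meets every a-class at most once and every b-class at most once). Then: (i) if x ∼𝐛 z then Γ_μ(x,x,z) = z; (ii) if x ∼𝐚 z then Γ_μ(x,z,z) = x, where Γ_μ(x,y,z) := {μ ξ η ζ | ξ ∈ x, η ∈ y, ζ ∈ z, a η ξ, b η ζ}. -/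
theorem gammaProd_idempotent {Ω : Type*} (a b : Ω → Ω → Prop)
    (ha : Equivalence a) (hb : Equivalence b)
    (μ : Ω → Ω → Ω → Ω)
    (hC : ∀ ξ η ζ, a ξ η → b η ζ → a (μ ξ η ζ) ζ ∧ b (μ ξ η ζ) ξ)
    (hIP1 : ∀ η ζ, b η ζ → μ η η ζ = ζ)
    (hIP2 : ∀ ξ η, a ξ η → μ ξ η η = ξ)
    (x z : Set Ω) (hx : LocBisection a b x) (hz : LocBisection a b z) :
    (indRel b x z → gammaProd a b μ x x z = z) ∧
    (indRel a x z → gammaProd a b μ x z z = x) := by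
  constructor
  · intro h
    ext ω
    constructor
    · -- Transversality of `x` to `a` forces `ξ = η`, so only values `μ η η ζ = ζ` occur.
      rintro ⟨ξ, hξ, η, hη, ζ, hζ, h1, h2, rfl⟩
      obtain rfl := hx.1 η hη ξ hξ h1
      rwa [hIP1 η ζ h2]
    · intro hω
      obtain ⟨η, hη, h2⟩ := (h ω).2 ⟨ω, hω, hb.refl ω⟩
      exact ⟨η, hη, η, hη, ω, hω, ha.refl η, h2, (hIP1 η ω h2).symm⟩
  · intro h
    ext ω
    constructor
    · -- Transversality of `z` to `b` forces `η = ζ`, so only values `μ ξ η η = ξ` occur.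
      rintro ⟨ξ, hξ, η, hη, ζ, hζ, h1, h2, rfl⟩
      obtain rfl := hz.2 η hη ζ hζ h2
      rwa [hIP2 ξ η (ha.symm h1)]
    · intro hω
      obtain ⟨η, hη, h1⟩ := (h ω).1 ⟨ω, hω, ha.refl ω⟩
      exact ⟨ω, hω, η, hη, η, hη, h1, hb.refl η, (hIP2 ω η (ha.symm h1)).symm⟩
end

section
/- Let (Ω, a, b, μ) be a pregroupoid. If x, z ⊆ Ω are transversal to a (each contains exactly one element of every a-class) and y ⊆ Ω is transversal to b, then Γ_μ(x,y,z) is transversal to a. Symmetrically, if x, z are transversal to b and y is transversal to a, then Γ_μ(x,y,z) is transversal to b. (Thus (U_a, U_b) is a generalized associative pair under Γ_μ.) -/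
/-- `x` is transversal to `a`: it contains exactly one element of each `a`-class. -/
def Transversal {Ω : Type*} (a : Ω → Ω → Prop) (x : Set Ω) : Prop :=
  ∀ ω, ∃! ξ, ξ ∈ x ∧ a ξ ω

theorem gammaProd_associativePair {Ω : Type*} (a b : Ω → Ω → Prop)
    (ha : Equivalence a) (hb : Equivalence b)
    (μ : Ω → Ω → Ω → Ω)
    (hC : ∀ ξ η ζ, a ξ η → b η ζ → a (μ ξ η ζ) ζ ∧ b (μ ξ η ζ) ξ)
    (hPA : ∀ ξ η ρ σ τ, a ξ η → b η ρ → a ρ σ → b σ τ →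
      μ ξ η (μ ρ σ τ) = μ ξ (μ σ ρ η) τ ∧ μ ξ (μ σ ρ η) τ = μ (μ ξ η ρ) σ τ)
    (hIP1 : ∀ η ζ, b η ζ → μ η η ζ = ζ)
    (hIP2 : ∀ ξ η, a ξ η → μ ξ η η = ξ) :
    (∀ x y z : Set Ω, Transversal a x → Transversal b y → Transversal a z →
      Transversal a (gammaProd a b μ x y z)) ∧
    (∀ x y z : Set Ω, Transversal b x → Transversal a y → Transversal b z →
      Transversal b (gammaProd a b μ x y z)) := by
  refine ⟨fun x y z hx hy hz ω => ?_, fun x y z hx hy hz ω => ?_⟩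
  · obtain ⟨ζ, ⟨hζz, hζω⟩, hζ⟩ := hz ω
    obtain ⟨η, ⟨hηy, hηζ⟩, hη⟩ := hy ζ
    obtain ⟨ξ, ⟨hξx, hξη⟩, hξ⟩ := hx η
    refine ⟨μ ξ η ζ, ⟨⟨ξ, hξx, η, hηy, ζ, hζz, ha.symm hξη, hηζ, rfl⟩,
      ha.trans (hC ξ η ζ hξη hηζ).1 hζω⟩, ?_⟩
    rintro _ ⟨⟨ξ', hξ'x, η', hη'y, ζ', hζ'z, hηξ', hηζ', rfl⟩, hω⟩
    obtain rfl := hζ ζ' ⟨hζ'z, ha.trans (ha.symm (hC ξ' η' ζ' (ha.symm hηξ') hηζ').1) hω⟩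
    obtain rfl := hη η' ⟨hη'y, hηζ'⟩
    obtain rfl := hξ ξ' ⟨hξ'x, ha.symm hηξ'⟩
    rfl
  · obtain ⟨ξ, ⟨hξx, hξω⟩, hξ⟩ := hx ω
    obtain ⟨η, ⟨hηy, hηξ⟩, hη⟩ := hy ξ
    obtain ⟨ζ, ⟨hζz, hζη⟩, hζ⟩ := hz η
    refine ⟨μ ξ η ζ, ⟨⟨ξ, hξx, η, hηy, ζ, hζz, hηξ, hb.symm hζη, rfl⟩,
      hb.trans (hC ξ η ζ (ha.symm hηξ) (hb.symm hζη)).2 hξω⟩, ?_⟩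
    rintro _ ⟨⟨ξ', hξ'x, η', hη'y, ζ', hζ'z, hηξ', hηζ', rfl⟩, hω⟩
    obtain rfl := hξ ξ' ⟨hξ'x, hb.trans (hb.symm (hC ξ' η' ζ' (ha.symm hηξ') hηζ').2) hω⟩
    obtain rfl := hη η' ⟨hη'y, hηξ'⟩
    obtain rfl := hζ ζ' ⟨hζ'z, hb.symm hηζ'⟩
    rfl
end

section
/- Let a, b be equivalence relations on a set Ω and let μ : Ω → Ω → Ω → Ω satisfy condition (C): whenever a ξ η and b η ζ, one has a (μ ξ η ζ) ζ and b (μ ξ η ζ) ξ. Suppose x ⊆ Ω meets each a-class at most once and y ⊆ Ω meets each b-class at most once. Then the left multiplication operator L_{xayb} maps b-classes to b-classes: for all ζ, ζ', η, η' ∈ Ω with η ∈ y, b η ζ, η' ∈ y, b η' ζ', and all ξ, ξ' ∈ x with a ξ η and a ξ' η', if b ζ ζ' then b (μ ξ η ζ) (μ ξ' η' ζ'). (Together with the fact that a (μ ξ η ζ) ζ, this says L_{xayb} lies in Aut₁(a) ∩ Aut(b).) -/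
theorem leftMul_maps_b_classes {Ω : Type*} (a b : Ω → Ω → Prop)
    (ha : Equivalence a) (hb : Equivalence b)
    (μ : Ω → Ω → Ω → Ω)
    (hC : ∀ ξ η ζ, a ξ η → b η ζ → a (μ ξ η ζ) ζ ∧ b (μ ξ η ζ) ξ)
    (x y : Set Ω) (hx : LocTransversal a x) (hy : LocTransversal b y) :
    ∀ ζ ζ' η η' ξ ξ' : Ω, η ∈ y → b η ζ → η' ∈ y → b η' ζ' →
      ξ ∈ x → a ξ η → ξ' ∈ x → a ξ' η' →
      b ζ ζ' → b (μ ξ η ζ) (μ ξ' η' ζ') := by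
  intro ζ ζ' η η' ξ ξ' hη hηζ hη' hηζ' hξ hξη hξ' hξη' hζ
  -- Transversality of `y`, then of `x`, makes the choices for `ζ` and `ζ'` coincide.
  obtain rfl : η = η' := hy η hη η' hη' (hb.trans hηζ (hb.trans hζ (hb.symm hηζ')))
  obtain rfl : ξ = ξ' := hx ξ hξ ξ' hξ' (ha.trans hξη (ha.symm hξη'))
  -- Both values lie in the `b`-class of `ξ`.
  exact hb.trans (hC ξ η ζ hξη hηζ).2 (hb.symm (hC ξ η ζ' hξη hηζ').2)
end

section
/- Let (Ω, a, b, μ) be a pregroupoid, and let x, y ⊆ Ω with x meeting each a-class at most once and y meeting each b-class at most once. Then L_{xayb} ∘ L_{yaxb} is the identity wherever defined: for every ζ ∈ Ω, if ξ₁ ∈ x with b ξ₁ ζ, η₁ ∈ y with a η₁ ξ₁, and, setting w := μ η₁ ξ₁ ζ, if η₂ ∈ y with b η₂ w and ξ₂ ∈ x with a ξ₂ η₂, then μ ξ₂ η₂ w = ζ. -/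
theorem leftMul_inverse {Ω : Type*} (a b : Ω → Ω → Prop)
    (ha : Equivalence a) (hb : Equivalence b)
    (μ : Ω → Ω → Ω → Ω)
    (hC : ∀ ξ η ζ, a ξ η → b η ζ → a (μ ξ η ζ) ζ ∧ b (μ ξ η ζ) ξ)
    (hPA : ∀ ξ η ρ σ τ, a ξ η → b η ρ → a ρ σ → b σ τ →
      μ ξ η (μ ρ σ τ) = μ ξ (μ σ ρ η) τ ∧ μ ξ (μ σ ρ η) τ = μ (μ ξ η ρ) σ τ)
    (hIP1 : ∀ η ζ, b η ζ → μ η η ζ = ζ)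
    (hIP2 : ∀ ξ η, a ξ η → μ ξ η η = ξ)
    (x y : Set Ω) (hx : LocTransversal a x) (hy : LocTransversal b y) :
    ∀ ζ ξ₁ η₁ η₂ ξ₂ : Ω, ξ₁ ∈ x → b ξ₁ ζ → η₁ ∈ y → a η₁ ξ₁ →
      η₂ ∈ y → b η₂ (μ η₁ ξ₁ ζ) → ξ₂ ∈ x → a ξ₂ η₂ →
      μ ξ₂ η₂ (μ η₁ ξ₁ ζ) = ζ := by
  intro ζ ξ₁ η₁ η₂ ξ₂ hξ₁ hbξ₁ hη₁ haη₁ hη₂ hbη₂ hξ₂ haξ₂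
  -- `μ η₁ ξ₁ ζ` lies in the `b`-class of `η₁`, so transversality of `y`, then of `x`,
  -- forces the second pair of base points to be the first one.
  obtain rfl : η₂ = η₁ := hy _ hη₂ _ hη₁ (hb.trans hbη₂ (hC _ _ _ haη₁ hbξ₁).2)
  obtain rfl : ξ₂ = ξ₁ := hx _ hξ₂ _ hξ₁ (ha.trans haξ₂ haη₁)
  rw [(hPA _ _ _ _ _ haξ₂ (hb.refl _) haη₁ hbξ₁).1, hIP2 _ _ haξ₂, hIP1 _ _ hbξ₁]
end

section
/- Let M be a set with an everywhere-defined ternary product μ satisfying the idempotent law (IP): μ x x y = y and μ x y y = x for all x, y ∈ M. Then μ satisfies the para-associative law (PA) — μ x y (μ z u v) = μ x (μ u z y) v = μ (μ x y z) u v for all x, y, z, u, v — if and only if it satisfies the Chasles relations (Ch): μ x y (μ y u v) = μ x u v and μ (μ x y z) z v = μ x y v for all x, y, z, u, v. -/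
/-!
Write `L x y` for the left translation `t ↦ μ x y t`. Under (IP), the Chasles relations say
`L x y ∘ L y u = L x u` and `L (μ x y z) z = L x y`; in particular `L y x` is inverse to `L x y`.
Outer associativity follows by factoring `L w u = L w z ∘ L z u` with `w = μ x y z`. The middle
identity follows by factoring `L x y = L x w ∘ L w y` with `w = μ u z y`, since `L w y = L u z` is
inverse to `L z u`. Conversely, the Chasles relations are the instances of outer associativity in
which (IP) cancels a repeated argument.
-/

theorem paraAssoc_iff_chasles {M : Type*} (μ : M → M → M → M)
    (hIP : ∀ x y : M, μ x x y = y ∧ μ x y y = x) :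
    (∀ x y z u v : M,
        μ x y (μ z u v) = μ x (μ u z y) v ∧ μ x (μ u z y) v = μ (μ x y z) u v) ↔
    (∀ x y z u v : M, μ x y (μ y u v) = μ x u v ∧ μ (μ x y z) z v = μ x y v) := by
  constructor
  · intro h
    have outer (x y z u v : M) : μ x y (μ z u v) = μ (μ x y z) u v :=
      (h x y z u v).1.trans (h x y z u v).2
    intro x y z u v
    constructor
    · rw [outer, (hIP x y).2]
    · rw [← outer, (hIP z v).1]
  · intro h
    have comp (x y u v : M) : μ x y (μ y u v) = μ x u v := (h x y y u v).1
    have cancel (x y z v : M) : μ (μ x y z) z v = μ x y v := (h x y z z v).2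
    intro x y z u v
    have outer : μ x y (μ z u v) = μ (μ x y z) u v := by
      rw [← comp (μ x y z) z u v, cancel]
    have inner : μ x y (μ z u v) = μ x (μ u z y) v := by
      rw [← comp x (μ u z y) y (μ z u v), cancel, comp, (hIP u v).1]
    exact ⟨inner, inner.symm.trans outer⟩
end

section
/- Let a be an equivalence relation on a set Ω and μ : Ω → Ω → Ω → Ω a map satisfying: (C_a) whenever a ξ η and a η ζ, a (μ ξ η ζ) ζ; (PA_a) whenever a ξ η, a η ρ, a ρ σ and a σ τ, μ ξ η (μ ρ σ τ) = μ ξ (μ σ ρ η) τ = μ (μ ξ η ρ) σ τ; (IP_a) μ η η ζ = ζ and μ ξ η η = ξ whenever a η ζ, respectively a ξ η (i.e. (Ω, a, μ) is a torsor bundle over Ω/a). Define, for subsets x, y, z ⊆ Ω, (xyz)_a := {μ ξ η ζ | ξ ∈ x, η ∈ y, ζ ∈ z, a η ξ, a η ζ}. Then: (i) if x, y, z are transversal to a (contain exactly one element of each a-class), so is (xyz)_a; (ii) for x, z transversal to a, (xxz)_a = z and (xzz)_a = x. (Hence the set U_a of sections of a is a torsor under ( )_a.) -/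
/-!
The product of sections is computed classwise: since `μ ξ η ζ` stays in the class of its
arguments, the part of `(xyz)_a` over a class is `μ` applied to the unique representatives
of `x`, `y`, `z` in that class, hence a single point. When two neighbouring sections agree,
`Transversal.eq_of_rel` makes the corresponding representatives equal, and the idempotent
laws of `μ` give the claim in each class.
-/

/-- The product induced on subsets of `Ω` by a torsor bundle structure `(a, μ)`. -/
def torsorBundleProd {Ω : Type*} (a : Ω → Ω → Prop) (μ : Ω → Ω → Ω → Ω)
    (x y z : Set Ω) : Set Ω :=
  {ω | ∃ ξ ∈ x, ∃ η ∈ y, ∃ ζ ∈ z, a η ξ ∧ a η ζ ∧ ω = μ ξ η ζ}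

/-- Two equivalent points of a transversal set coincide. -/
theorem Transversal.eq_of_rel {Ω : Type*} {a : Ω → Ω → Prop} (ha : Equivalence a)
    {x : Set Ω} (hx : Transversal a x) {ξ ξ' : Ω} (h : ξ ∈ x) (h' : ξ' ∈ x)
    (hr : a ξ ξ') : ξ = ξ' :=
  (hx ξ').unique ⟨h, hr⟩ ⟨h', ha.refl ξ'⟩

theorem sections_torsor {Ω : Type*} (a : Ω → Ω → Prop)
    (ha : Equivalence a)
    (μ : Ω → Ω → Ω → Ω)
    (hC : ∀ ξ η ζ, a ξ η → a η ζ → a (μ ξ η ζ) ζ)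
    (hPA : ∀ ξ η ρ σ τ, a ξ η → a η ρ → a ρ σ → a σ τ →
      μ ξ η (μ ρ σ τ) = μ ξ (μ σ ρ η) τ ∧ μ ξ (μ σ ρ η) τ = μ (μ ξ η ρ) σ τ)
    (hIP1 : ∀ η ζ, a η ζ → μ η η ζ = ζ)
    (hIP2 : ∀ ξ η, a ξ η → μ ξ η η = ξ) :
    (∀ x y z : Set Ω, Transversal a x → Transversal a y → Transversal a z →
      Transversal a (torsorBundleProd a μ x y z)) ∧
    (∀ x z : Set Ω, Transversal a x → Transversal a z →
      torsorBundleProd a μ x x z = z ∧ torsorBundleProd a μ x z z = x) := by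
  refine ⟨fun x y z hx hy hz ω => ?_, fun x z hx hz => ⟨?_, ?_⟩⟩
  · obtain ⟨ξ, hξ, hξω⟩ := (hx ω).exists
    obtain ⟨η, hη, hηω⟩ := (hy ω).exists
    obtain ⟨ζ, hζ, hζω⟩ := (hz ω).exists
    have hηξ : a η ξ := ha.trans hηω (ha.symm hξω)
    have hηζ : a η ζ := ha.trans hηω (ha.symm hζω)
    refine ⟨μ ξ η ζ, ⟨⟨ξ, hξ, η, hη, ζ, hζ, hηξ, hηζ, rfl⟩,
      ha.trans (hC ξ η ζ (ha.symm hηξ) hηζ) hζω⟩, ?_⟩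
    rintro _ ⟨⟨ξ', hξ', η', hη', ζ', hζ', hηξ', hηζ', rfl⟩, hω⟩
    -- By `hC` the point `μ ξ' η' ζ'` lies in the class of `ζ'`, so all three factors
    -- lie in the class of `ω`.
    have hζω' : a ζ' ω := ha.trans (ha.symm (hC ξ' η' ζ' (ha.symm hηξ') hηζ')) hω
    have hηω' : a η' ω := ha.trans hηζ' hζω'
    have hξω' : a ξ' ω := ha.trans (ha.symm hηξ') hηω'
    rw [(hx ω).unique ⟨hξ', hξω'⟩ ⟨hξ, hξω⟩, (hy ω).unique ⟨hη', hηω'⟩ ⟨hη, hηω⟩,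
      (hz ω).unique ⟨hζ', hζω'⟩ ⟨hζ, hζω⟩]
  · ext ω
    constructor
    · rintro ⟨ξ, hξ, η, hη, ζ, hζ, hηξ, hηζ, rfl⟩
      rwa [← hx.eq_of_rel ha hη hξ hηξ, hIP1 η ζ hηζ]
    · intro hω
      obtain ⟨ξ, hξ, hξω⟩ := (hx ω).exists
      exact ⟨ξ, hξ, ξ, hξ, ω, hω, ha.refl ξ, hξω, (hIP1 ξ ω hξω).symm⟩
  · ext ω
    constructor
    · rintro ⟨ξ, hξ, η, hη, ζ, hζ, hηξ, hηζ, rfl⟩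
      rwa [← hz.eq_of_rel ha hη hζ hηζ, hIP2 ξ η (ha.symm hηξ)]
    · intro hω
      obtain ⟨ζ, hζ, hζω⟩ := (hz ω).exists
      exact ⟨ω, hω, ζ, hζ, ζ, hζ, hζω, ha.refl ζ, (hIP2 ω ζ (ha.symm hζω)).symm⟩
end

section
/- Let Ω be a group and A, B subgroups of Ω. For subsets x, y, z ⊆ Ω define Γ(x,y,z) := {ξ * η⁻¹ * ζ | ξ ∈ x, η ∈ y, ζ ∈ z, η * ξ⁻¹ ∈ A, η⁻¹ * ζ ∈ B} and (uvw)_a := {ρ * σ⁻¹ * τ | ρ ∈ u, σ ∈ v, τ ∈ w, σ * ρ⁻¹ ∈ A, σ * τ⁻¹ ∈ A}. Let U_a be the set of subsets of Ω containing exactly one element of each right coset A·g, and U_{ab} the set of subsets containing exactly one element of each right coset A·g and of each left coset g·B. Then the right distributive law holds: for all u, v, w ∈ U_a and all y, z ∈ U_{ab}, Γ((uvw)_a, y, z) = (Γ(u,y,z) Γ(v,y,z) Γ(w,y,z))_a. (Right multiplication by elements of the torsor U_{ab} is an automorphism of the torsor U_a.) -/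
/-! On elements, `ρ σ⁻¹ τ η⁻¹ ζ = (ρ η⁻¹ ζ) (σ η⁻¹ ζ)⁻¹ (τ η⁻¹ ζ)`, so the left-hand side is
contained in the right-hand side. Conversely, elements `ξᵢ ηᵢ⁻¹ ζᵢ` of sets `Γ(·, y, z)` lie in the
right cosets `A ζᵢ`, because `ξᵢ ηᵢ⁻¹ ∈ A`. If they are `A`-equivalent, the `ζᵢ` coincide since `z`
meets each right coset of `A` once, and then the `ηᵢ`, all in the left coset `ζ B`, coincide since
`y` meets each left coset of `B` once (`gamma_factors_unique`); the same identity then gives the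
reverse inclusion. -/

/-- The product `Γ(x,y,z)` associated to a pair of subgroups `A`, `B` of a
group `Ω` (homogeneous pregroupoid). -/
def groupGamma {Ω : Type*} [Group Ω] (A B : Subgroup Ω) (x y z : Set Ω) : Set Ω :=
  {ω | ∃ ξ ∈ x, ∃ η ∈ y, ∃ ζ ∈ z, η * ξ⁻¹ ∈ A ∧ η⁻¹ * ζ ∈ B ∧ ω = ξ * η⁻¹ * ζ}

/-- The product `(uvw)_a` associated to the subgroup `A` alone. -/
def groupProdA {Ω : Type*} [Group Ω] (A : Subgroup Ω) (u v w : Set Ω) : Set Ω :=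
  {ω | ∃ ρ ∈ u, ∃ σ ∈ v, ∃ τ ∈ w, σ * ρ⁻¹ ∈ A ∧ σ * τ⁻¹ ∈ A ∧ ω = ρ * σ⁻¹ * τ}

/-- `x` contains exactly one element of each right coset `A·g`. -/
def SectionA {Ω : Type*} [Group Ω] (A : Subgroup Ω) (x : Set Ω) : Prop :=
  ∀ g : Ω, ∃! ξ, ξ ∈ x ∧ g * ξ⁻¹ ∈ A

/-- `x` contains exactly one element of each right coset `A·g` and of each
left coset `g·B` (a bisection). -/
def BisectionAB {Ω : Type*} [Group Ω] (A B : Subgroup Ω) (x : Set Ω) : Prop :=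
  (∀ g : Ω, ∃! ξ, ξ ∈ x ∧ g * ξ⁻¹ ∈ A) ∧ (∀ g : Ω, ∃! ξ, ξ ∈ x ∧ g⁻¹ * ξ ∈ B)

/-- `A`-equivalent elements of sets `Γ(·, y, z)` come from the same elements of `y` and `z`. -/
lemma gamma_factors_unique {Ω : Type*} [Group Ω] {A B : Subgroup Ω} {y z : Set Ω}
    (hy : BisectionAB A B y) (hz : BisectionAB A B z) {ρ σ η η' ζ ζ' : Ω}
    (hη : η ∈ y) (hη' : η' ∈ y) (hζ : ζ ∈ z) (hζ' : ζ' ∈ z)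
    (h₁ : η * ρ⁻¹ ∈ A) (h₂ : η⁻¹ * ζ ∈ B) (h₁' : η' * σ⁻¹ ∈ A) (h₂' : η'⁻¹ * ζ' ∈ B)
    (h : (ρ * η⁻¹ * ζ) * (σ * η'⁻¹ * ζ')⁻¹ ∈ A) : η' = η ∧ ζ' = ζ := by
  have hA : ζ * ζ'⁻¹ ∈ A := by
    convert A.mul_mem (A.mul_mem h₁ h) (A.inv_mem h₁') using 1
    group
  have e : ζ' = ζ := (hz.1 ζ).unique ⟨hζ', hA⟩ ⟨hζ, by simp⟩
  subst e
  refine ⟨(hy.2 ζ').unique ⟨hη', ?_⟩ ⟨hη, ?_⟩, rfl⟩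
  · simpa using B.inv_mem h₂'
  · simpa using B.inv_mem h₂

theorem group_right_distributive {Ω : Type*} [Group Ω] (A B : Subgroup Ω)
    (u v w : Set Ω) (hu : SectionA A u) (hv : SectionA A v) (hw : SectionA A w)
    (y z : Set Ω) (hy : BisectionAB A B y) (hz : BisectionAB A B z) :
    groupGamma A B (groupProdA A u v w) y z =
      groupProdA A (groupGamma A B u y z) (groupGamma A B v y z)
        (groupGamma A B w y z) := by
  ext ω
  constructor
  · rintro ⟨_, ⟨ρ, hρ, σ, hσ, τ, hτ, h₁, h₂, rfl⟩, η, hη, ζ, hζ, h₃, h₄, rfl⟩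
    have hτA : η * τ⁻¹ ∈ A := by
      convert A.mul_mem h₃ (A.inv_mem h₁) using 1
      group
    have hσA : η * σ⁻¹ ∈ A := by
      convert A.mul_mem hτA (A.inv_mem h₂) using 1
      group
    have hρA : η * ρ⁻¹ ∈ A := by
      convert A.mul_mem hσA h₁ using 1
      group
    refine ⟨_, ⟨ρ, hρ, η, hη, ζ, hζ, hρA, h₄, rfl⟩, _, ⟨σ, hσ, η, hη, ζ, hζ, hσA, h₄, rfl⟩,
      _, ⟨τ, hτ, η, hη, ζ, hζ, hτA, h₄, rfl⟩, ?_, ?_, ?_⟩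
    · convert h₁ using 1
      group
    · convert h₂ using 1
      group
    · group
  · rintro ⟨_, ⟨ρ, hρ, η₁, hη₁, ζ₁, hζ₁, a₁, b₁, rfl⟩, _, ⟨σ, hσ, η, hη, ζ, hζ, a, b, rfl⟩,
      _, ⟨τ, hτ, η₂, hη₂, ζ₂, hζ₂, a₂, b₂, rfl⟩, h₁, h₂, rfl⟩
    obtain ⟨rfl, rfl⟩ := gamma_factors_unique hy hz hη hη₁ hζ hζ₁ a b a₁ b₁ h₁
    obtain ⟨rfl, rfl⟩ := gamma_factors_unique hy hz hη₁ hη₂ hζ₁ hζ₂ a b a₂ b₂ h₂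
    have hρσ : σ * ρ⁻¹ ∈ A := by
      convert h₁ using 1
      group
    have hτσ : σ * τ⁻¹ ∈ A := by
      convert h₂ using 1
      group
    refine ⟨_, ⟨ρ, hρ, σ, hσ, τ, hτ, hρσ, hτσ, rfl⟩, _, hη₂, _, hζ₂, ?_, b₂, ?_⟩
    · convert A.mul_mem a₂ hρσ using 1
      group
    · group
end
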